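/- For every n ∈ ℕ and every real α with −1 < α ≤ 1 and α ≠ 0, the Fisher information integral of the Rakhmanov density of the orthonormal Laguerre polynomial diverges: ∫_0^∞ (ρ_{n,α}′(x))²/ρ_{n,α}(x) dx = +∞; equivalently, the Fisher length (δx)_{n,α} = 0. -/

import Mathlib

open MeasureTheory Real

/-- The generalized Laguerre polynomial `L_n^{(α)}`. -/
noncomputable def laguerreL (α : ℝ) (n : ℕ) (x : ℝ) : ℝ :=
  ∑ k ∈ Finset.range (n + 1),
    (-1) ^ k * Real.Gamma ((n : ℝ) + α + 1) /
      (Real.Gamma ((k : ℝ) + α + 1) * ((n - k).factorial : ℝ) * (k.factorial : ℝ)) * x ^ k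

/-- The Rakhmanov density of the orthonormal Laguerre polynomial
`p_n^{(α)}(x) = (n!/Γ(n+α+1))^{1/2} L_n^{(α)}(x)`, i.e.
`ρ_{n,α}(x) = p_n^{(α)}(x)^2 x^α e^{-x}`. -/
noncomputable def laguerreρ (α : ℝ) (n : ℕ) (x : ℝ) : ℝ :=
  ((n.factorial : ℝ) / Real.Gamma ((n : ℝ) + α + 1)) * (laguerreL α n x) ^ 2 *
    x ^ α * Real.exp (-x)

/-!
Near the origin the density has the form `ρ(x) = x^α h(x)` with `h` smooth and `h(0) > 0`, so
`ρ'(x)² / ρ(x) = x^(α-2) (α h(x) + x h'(x))² / h(x)`. The last factor tends to `α² h(0) > 0`, while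
`x^(α-2)` is not integrable at the origin because `α - 2 ≤ -1`.
-/

open Filter Set Topology

section FisherInformation

/-- The Fisher information `∫_Δ (ρ')² / ρ` of a density `ρ` on `Δ`, as a lower Lebesgue integral,
so that a divergent integral has the value `⊤`. -/
noncomputable def fisherInformation (ρ : ℝ → ℝ) (Δ : Set ℝ) : ENNReal :=
  ∫⁻ x in Δ, ENNReal.ofReal (deriv ρ x ^ 2 / ρ x)

lemma setLIntegral_Ioo_ofReal_rpow_eq_top {s t : ℝ} (ht : 0 < t) (hs : s ≤ -1) :
    ∫⁻ x in Ioo 0 t, ENNReal.ofReal (x ^ s) = ⊤ := by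
  have not_integrable : ¬ IntegrableOn (fun x : ℝ => x ^ s) (Ioo 0 t) := by
    rw [intervalIntegral.integrableOn_Ioo_rpow_iff ht]
    exact hs.not_gt
  have rpow_nonneg : 0 ≤ᵐ[volume.restrict (Ioo 0 t)] fun x : ℝ => x ^ s :=
    ae_restrict_of_forall_mem measurableSet_Ioo fun x hx => Real.rpow_nonneg hx.1.le s
  by_contra finite
  exact not_integrable <| (lintegral_ofReal_ne_top_iff_integrable
    (by fun_prop : Measurable fun x : ℝ => x ^ s).aestronglyMeasurable rpow_nonneg).1 finite

lemma setLIntegral_Ioi_ofReal_eq_top_of_const_mul_rpow_le {s c : ℝ} {f : ℝ → ℝ} (hs : s ≤ -1)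
    (hc : 0 < c) (hf : ∀ᶠ x in 𝓝[>] 0, c * x ^ s ≤ f x) :
    ∫⁻ x in Ioi 0, ENNReal.ofReal (f x) = ⊤ := by
  obtain ⟨t, ht, hft⟩ := mem_nhdsGT_iff_exists_Ioo_subset.1 hf
  refine top_unique ?_
  calc ⊤ = ENNReal.ofReal c * ∫⁻ x in Ioo 0 t, ENNReal.ofReal (x ^ s) := by
        rw [setLIntegral_Ioo_ofReal_rpow_eq_top ht hs,
          ENNReal.mul_top (ENNReal.ofReal_pos.2 hc).ne']
    _ = ∫⁻ x in Ioo 0 t, ENNReal.ofReal (c * x ^ s) := by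
        simp only [ENNReal.ofReal_mul hc.le, lintegral_const_mul' _ _ ENNReal.ofReal_ne_top]
    _ ≤ ∫⁻ x in Ioo 0 t, ENNReal.ofReal (f x) :=
        setLIntegral_mono' measurableSet_Ioo fun x hx => ENNReal.ofReal_le_ofReal (hft hx)
    _ ≤ ∫⁻ x in Ioi 0, ENNReal.ofReal (f x) := lintegral_mono_set Ioo_subset_Ioi_self

lemma deriv_rpow_mul {α x : ℝ} {h : ℝ → ℝ} (hx : 0 < x) (hh : DifferentiableAt ℝ h x) :
    deriv (fun y => y ^ α * h y) x = x ^ (α - 1) * (α * h x + x * deriv h x) := by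
  have hpow : x ^ α = x ^ (α - 1) * x := by
    rw [← Real.rpow_add_one hx.ne', sub_add_cancel]
  rw [((Real.hasDerivAt_rpow_const (Or.inl hx.ne')).fun_mul hh.hasDerivAt).deriv, hpow]
  ring

lemma deriv_rpow_mul_sq_div {α x : ℝ} {h : ℝ → ℝ} (hx : 0 < x) (hh : DifferentiableAt ℝ h x) :
    deriv (fun y => y ^ α * h y) x ^ 2 / (x ^ α * h x) =
      (α * h x + x * deriv h x) ^ 2 / h x * x ^ (α - 2) := by
  have hpow : (x ^ (α - 1)) ^ 2 = x ^ (α - 2) * x ^ α := by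
    rw [sq, ← Real.rpow_add hx, ← Real.rpow_add hx]
    ring_nf
  have hxα : x ^ α ≠ 0 := (Real.rpow_pos_of_pos hx α).ne'
  rw [deriv_rpow_mul hx hh, mul_pow, hpow]
  field_simp

lemma tendsto_const_mul_add_mul_deriv_sq_div {α : ℝ} {h : ℝ → ℝ} (hh : ContDiffAt ℝ 1 h 0)
    (h0 : h 0 ≠ 0) :
    Tendsto (fun x => (α * h x + x * deriv h x) ^ 2 / h x) (𝓝 0) (𝓝 (α ^ 2 * h 0)) := by
  have hcont : ContinuousAt h 0 := hh.continuousAt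
  have hderiv : ContinuousAt (deriv h) 0 :=
    (hh.continuousAt_fderiv one_ne_zero).clm_apply continuousAt_const
  have hlim : (α * h 0 + 0 * deriv h 0) ^ 2 / h 0 = α ^ 2 * h 0 := by
    field_simp
    ring
  rw [← hlim]
  exact (((hcont.const_mul α).add (continuousAt_id.mul hderiv)).pow 2).div hcont h0

theorem fisherInformation_rpow_mul_Ioi_eq_top {α : ℝ} {h : ℝ → ℝ} (hα : α ≤ 1) (hα0 : α ≠ 0)
    (hh : ContDiffAt ℝ 1 h 0) (h0 : 0 < h 0) :
    fisherInformation (fun x => x ^ α * h x) (Ioi 0) = ⊤ := by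
  have limit_pos : 0 < α ^ 2 * h 0 := by positivity
  obtain ⟨c, hc, hc_lt⟩ := exists_between limit_pos
  have eventually_le : ∀ᶠ x in 𝓝[>] 0, c ≤ (α * h x + x * deriv h x) ^ 2 / h x :=
    nhdsWithin_le_nhds <|
      (tendsto_const_mul_add_mul_deriv_sq_div hh h0.ne').eventually_const_le hc_lt
  have eventually_differentiable : ∀ᶠ x in 𝓝[>] 0, DifferentiableAt ℝ h x :=
    nhdsWithin_le_nhds <| (hh.eventually (by simp)).mono fun _ hx =>
      hx.differentiableAt one_ne_zero
  refine setLIntegral_Ioi_ofReal_eq_top_of_const_mul_rpow_le (s := α - 2) (by linarith) hc ?_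
  filter_upwards [eventually_le, eventually_differentiable, self_mem_nhdsWithin]
    with x hcx hdx hx
  rw [deriv_rpow_mul_sq_div hx hdx]
  exact mul_le_mul_of_nonneg_right hcx (Real.rpow_nonneg (le_of_lt hx) _)

end FisherInformation

section Laguerre

variable (α : ℝ) (n : ℕ)

lemma contDiff_laguerreL {m : WithTop ℕ∞} : ContDiff ℝ m (laguerreL α n) := by
  unfold laguerreL
  fun_prop

lemma laguerreL_zero :
    laguerreL α n 0 = Real.Gamma (n + α + 1) / (Real.Gamma (α + 1) * n.factorial) := by
  rw [laguerreL, Finset.sum_eq_single_of_mem 0 (by simp) fun k _ hk => by simp [hk]]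
  simp

lemma laguerreρ_eq_rpow_mul :
    laguerreρ α n = fun x =>
      x ^ α * (n.factorial / Real.Gamma (n + α + 1) * laguerreL α n x ^ 2 * Real.exp (-x)) := by
  funext x
  rw [laguerreρ]
  ring

end Laguerre

/-- For every `n ∈ ℕ` and real `α` with `−1 < α ≤ 1`, `α ≠ 0`, the Fisher
information integral of the Rakhmanov density of the orthonormal Laguerre polynomial
diverges: `∫_0^∞ (ρ_{n,α}')²/ρ_{n,α} = +∞`. -/
theorem laguerre_fisher_diverges (n : ℕ) (α : ℝ) (h1 : -1 < α) (h2 : α ≤ 1) (h3 : α ≠ 0) :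
    ∫⁻ x in Set.Ioi (0 : ℝ),
      ENNReal.ofReal ((deriv (laguerreρ α n) x) ^ 2 / laguerreρ α n x) = ⊤ := by
  have Gamma_pos : 0 < Real.Gamma (α + 1) := Real.Gamma_pos_of_pos (by linarith)
  have Gamma_add_pos : 0 < Real.Gamma (n + α + 1) :=
    Real.Gamma_pos_of_pos (by linarith [n.cast_nonneg (α := ℝ)])
  change fisherInformation (laguerreρ α n) (Ioi 0) = ⊤
  rw [laguerreρ_eq_rpow_mul]
  refine fisherInformation_rpow_mul_Ioi_eq_top h2 h3 ?smooth ?positive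
  case smooth =>
    have smooth_laguerreL := contDiff_laguerreL α n (m := 1)
    fun_prop
  case positive =>
    rw [laguerreL_zero]
    positivity
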